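/- arXiv:2507.01761 — 2 statements merged into one kernel-verified Lean document; each statement's English description precedes it below -/
import Mathlib

section
/- Let Z_1, …, Z_{N−1+M} be independent real-valued random variables, each with the same atomless Borel probability law, and fix integers k, k' with 1 ≤ k ≤ N − 1 and 1 ≤ k' ≤ M. Let R denote the k-th smallest element of the multiset {Z_1, …, Z_{N−1}}, let S denote the k'-th smallest element of the multiset {Z_N, …, Z_{N−1+M}}, and let C = #{j ∈ {1, …, M} : Z_{N−1+j} ≤ R}. Then P(S ≤ R) = P(C ≥ k') = ∑_{j=k'}^M C(M, j) · B(k + j, M − j + N − k) / B(k, N − k), where C(M, j) is the binomial coefficient and B is the Beta function. -/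
open MeasureTheory ProbabilityTheory Finset

/-- The `k`-th smallest element of a multiset of real numbers
(the `k`-th entry of the multiset sorted in nondecreasing order). -/
noncomputable def kthSmallest (s : Multiset ℝ) (k : ℕ) : ℝ :=
  (Multiset.sort s (· ≤ ·)).getD (k - 1) 0

/-- The Beta function `B(x, y) = ∫₀¹ t^(x-1) (1-t)^(y-1) dt`. -/
noncomputable def Beta (x y : ℝ) : ℝ :=
  ∫ t in (0:ℝ)..1, t ^ (x - 1) * (1 - t) ^ (y - 1)

/-!
Given the first sample, `S ≤ R` means that at least `k'` of the `M` points of the second sample lie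
in `(-∞, R]`, which happens with conditional probability `∑_{j=k'}^M C(M,j) p^j (1-p)^{M-j}` at
`p = F(R)`, where `F` is the common cdf. As `F` is continuous, `F(Z_i)` is uniform on `[0, 1]`, so
`F(R)` has cdf `∑_{j=k}^{N-1} C(N-1,j) t^j (1-t)^{N-1-j}`. The derivative of this sum telescopes to
a single term, the density of the distribution `Beta(k, N-k)`; integrating each
`C(M,j) p^j (1-p)^{M-j}` against it gives a ratio of Beta functions.
-/

theorem getElem_mem_iff_lt_countP_of_isLowerSet {α : Type*} [Preorder α] {A : Set α}
    [DecidablePred (· ∈ A)] (hA : IsLowerSet A) {l : List α} (hl : l.Pairwise (· ≤ ·)) {i : ℕ}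
    (hi : i < l.length) : l[i] ∈ A ↔ i < l.countP (· ∈ A) := by
  induction l generalizing i with
  | nil => simp at hi
  | cons a l ih =>
    obtain ⟨ha, hl⟩ := List.pairwise_cons.1 hl
    by_cases haA : a ∈ A
    · cases i with
      | zero => simp [haA]
      | succ i => simpa [haA] using ih hl (Nat.lt_of_succ_lt_succ hi)
    · have hlA : ∀ b ∈ a :: l, b ∉ A := by
        rintro b (_ | ⟨_, hb⟩)
        exacts [haA, fun hbA ↦ haA (hA (ha b hb) hbA)]
      have hcount : (a :: l).countP (· ∈ A) = 0 := List.countP_eq_zero.2 (by simpa using hlA)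
      simp only [hcount, Nat.not_lt_zero, iff_false]
      exact hlA _ (List.getElem_mem hi)

theorem kthSmallest_mem_iff_le_countP {A : Set ℝ} [DecidablePred (· ∈ A)] (hA : IsLowerSet A)
    {s : Multiset ℝ} {k : ℕ} (hk : 1 ≤ k) (hks : k ≤ s.card) :
    kthSmallest s k ∈ A ↔ k ≤ s.countP (· ∈ A) := by
  have hlt : k - 1 < (s.sort (· ≤ ·)).length := by rw [Multiset.length_sort]; omega
  rw [kthSmallest, List.getD_eq_getElem _ _ hlt,
    getElem_mem_iff_lt_countP_of_isLowerSet hA (s.pairwise_sort _), ← Multiset.coe_countP,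
    Multiset.sort_eq]
  exact ⟨Nat.le_of_pred_lt, Nat.sub_one_lt_of_le hk⟩

/-- The order statistic `w₍ₖ₎` of a sample `w` of size `n`, indexed from `k = 1` to `k = n`. -/
noncomputable abbrev orderStatistic {n : ℕ} (w : Fin n → ℝ) (k : ℕ) : ℝ :=
  kthSmallest (List.ofFn w : Multiset ℝ) k

theorem orderStatistic_mem_iff_le_card {n k : ℕ} (hk : 1 ≤ k) (hkn : k ≤ n) {A : Set ℝ}
    [DecidablePred (· ∈ A)] (hA : IsLowerSet A) (w : Fin n → ℝ) :
    orderStatistic w k ∈ A ↔ k ≤ #{i | w i ∈ A} := by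
  rw [orderStatistic, kthSmallest_mem_iff_le_countP hA hk (by simpa using hkn),
    ← Fin.univ_val_map, Multiset.countP_map]
  rfl

theorem measurable_orderStatistic {n k : ℕ} (hk : 1 ≤ k) (hkn : k ≤ n) :
    Measurable fun w : Fin n → ℝ ↦ orderStatistic w k := by
  refine measurable_of_Iic fun r ↦ ?_
  have hcount : Measurable fun w : Fin n → ℝ ↦ ∑ i, (Set.Iic r).indicator (1 : ℝ → ℕ) (w i) :=
    Finset.measurable_sum _ fun i _ ↦
      (measurable_one.indicator measurableSet_Iic).comp (measurable_pi_apply i)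
  convert measurableSet_le (measurable_const (a := k)) hcount using 1
  ext w
  simp only [Set.mem_preimage, orderStatistic_mem_iff_le_card hk hkn (isLowerSet_Iic r),
    Finset.card_filter, Set.indicator_apply, Pi.one_apply, Set.mem_ofPred_eq]

open Polynomial in
/-- The binomial upper tail `∑_{j=k}^n C(n,j) p^j (1-p)^{n-j}` as a polynomial in the success
probability `p`. -/
noncomputable def binomialTail (n k : ℕ) : ℝ[X] :=
  ∑ j ∈ Icc k n, bernsteinPolynomial ℝ n j

theorem eval_bernsteinPolynomial (n j : ℕ) (t : ℝ) :
    (bernsteinPolynomial ℝ n j).eval t = n.choose j * t ^ j * (1 - t) ^ (n - j) := by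
  simp [bernsteinPolynomial]

theorem eval_zero_binomialTail {n k : ℕ} (hk : 1 ≤ k) : (binomialTail n k).eval 0 = 0 := by
  rw [binomialTail, Polynomial.eval_finsetSum]
  refine Finset.sum_eq_zero fun j hj ↦ ?_
  rw [bernsteinPolynomial.eval_at_0, if_neg (by grind)]

theorem eval_one_binomialTail {n k : ℕ} (hkn : k ≤ n) : (binomialTail n k).eval 1 = 1 := by
  simp [binomialTail, Polynomial.eval_finsetSum, bernsteinPolynomial.eval_at_1, hkn]

theorem derivative_binomialTail_succ {n k : ℕ} (hkn : k ≤ n) :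
    (binomialTail (n + 1) (k + 1)).derivative = (n + 1) * bernsteinPolynomial ℝ n k := by
  calc (binomialTail (n + 1) (k + 1)).derivative
      = ∑ j ∈ Ico k (n + 1), (bernsteinPolynomial ℝ (n + 1) (j + 1)).derivative := by
        rw [binomialTail, Polynomial.derivative_sum, Finset.sum_Ico_add'
          (fun j ↦ (bernsteinPolynomial ℝ (n + 1) j).derivative)]
        rfl
    _ = (n + 1) * -∑ j ∈ Ico k (n + 1),
          (bernsteinPolynomial ℝ n (j + 1) - bernsteinPolynomial ℝ n j) := by
        simp only [bernsteinPolynomial.derivative_succ_aux, ← Finset.sum_neg_distrib, neg_sub,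
          Finset.mul_sum]
    _ = (n + 1) * bernsteinPolynomial ℝ n k := by
        rw [Finset.sum_Ico_sub _ (by omega), bernsteinPolynomial.eq_zero_of_lt ℝ n.lt_succ_self,
          zero_sub, neg_neg]

theorem map_mem_eq_bernoulliMeasure {E : Type*} [MeasurableSpace E] (ν : Measure E)
    [IsProbabilityMeasure ν] {A : Set E} (hA : MeasurableSet A) :
    ν.map (· ∈ A) = bernoulliMeasure True False
      ⟨ν.real A, measureReal_nonneg, measureReal_le_one⟩ := by
  refine Measure.ext_of_measureReal_singleton fun q ↦ ?_
  rw [map_measureReal_apply hA.mem (measurableSet_singleton q)]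
  by_cases hq : q
  · rw [bernoulliMeasure_real_apply_of_mem_of_notMem]
    · simp only [hq, Set.preimage, Set.mem_singleton_iff, eq_iff_iff, iff_true, Set.ofPred_mem_eq]
    all_goals simp [hq]
  · rw [bernoulliMeasure_real_apply_of_notMem_of_mem]
    · simp [hq, Set.preimage, ← probReal_compl_eq_one_sub hA, Set.compl_def]
    all_goals simp [hq]

theorem map_setOf_mem_pi_eq_setBernoulli {ι E : Type*} [Fintype ι] [MeasurableSpace E]
    (ν : Measure E) [IsProbabilityMeasure ν] {A : Set E} (hA : MeasurableSet A) :
    (Measure.pi fun _ : ι ↦ ν).map (fun w ↦ {i | w i ∈ A}) =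
      setBernoulli Set.univ ⟨ν.real A, measureReal_nonneg, measureReal_le_one⟩ := by
  have := Measure.isProbabilityMeasure_map (μ := ν) hA.mem.aemeasurable
  have hpi : (Measure.pi fun _ : ι ↦ ν).map (fun w i ↦ w i ∈ A) =
      Measure.infinitePi fun _ : ι ↦ ν.map (· ∈ A) := by
    rw [Measure.infinitePi_eq_pi, Measure.pi_map_pi fun _ ↦ hA.mem.aemeasurable]
  have hmem : Measurable fun (w : ι → E) i ↦ w i ∈ A :=
    measurable_pi_lambda _ fun i ↦ hA.mem.comp (measurable_pi_apply i)
  rw [setBernoulli_eq_map]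
  simp only [Set.mem_univ, ← bernoulliMeasure_def]
  rw [← map_mem_eq_bernoulliMeasure ν hA, ← hpi,
    Measure.map_map measurable_setOfPred hmem]
  rfl

theorem measureReal_pi_le_card {ι E : Type*} [Fintype ι] [MeasurableSpace E]
    (ν : Measure E) [IsProbabilityMeasure ν] {A : Set E} [DecidablePred (· ∈ A)]
    (hA : MeasurableSet A) (k : ℕ) :
    (Measure.pi fun _ : ι ↦ ν).real {w | k ≤ #{i | w i ∈ A}} =
      (binomialTail (Fintype.card ι) k).eval (ν.real A) := by
  have hcard (w : ι → E) : #{i | w i ∈ A} = {i | w i ∈ A}.ncard := by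
    rw [Set.ncard_eq_toFinset_card', Set.toFinset_ofPred]
  have hmeas : Measurable fun w : ι → E ↦ {i | w i ∈ A} :=
    measurable_set_iff.2 fun i ↦ hA.mem.comp (measurable_pi_apply i)
  have hncard : Measurable (Set.ncard : Set ι → ℕ) := by fun_prop
  calc (Measure.pi fun _ : ι ↦ ν).real {w | k ≤ #{i | w i ∈ A}}
      = (Measure.pi fun _ : ι ↦ ν).real ((fun w ↦ {i | w i ∈ A}) ⁻¹' (Set.ncard ⁻¹'
          (Icc k (Fintype.card ι) : Finset ℕ))) := by
        congr 1
        ext w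
        simpa [hcard] using fun _ ↦ Set.ncard_le_card {i | w i ∈ A}
    _ = ∑ j ∈ Icc k (Fintype.card ι), (((Measure.pi fun _ : ι ↦ ν).map
          (fun w ↦ {i | w i ∈ A})).map Set.ncard).real {j} := by
        rw [sum_measureReal_singleton, map_measureReal_apply hncard .of_discrete,
          map_measureReal_apply hmeas (hncard .of_discrete)]
    _ = (binomialTail (Fintype.card ι) k).eval (ν.real A) := by
        rw [map_setOf_mem_pi_eq_setBernoulli ν hA, binomialTail, Polynomial.eval_finsetSum]
        simp only [map_ncard_setBernoulli_real_singleton Set.finite_univ, Set.ncard_univ,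
          Nat.card_eq_fintype_card, eval_bernsteinPolynomial]

theorem Beta_eq_beta {x y : ℝ} (hx : 0 < x) (hy : 0 < y) : Beta x y = beta x y := by
  rw [beta_eq_betaIntegralReal x y hx hy, Complex.betaIntegral, Beta,
    ← Complex.ofReal_re (∫ _ in _.._, _), ← intervalIntegral.integral_ofReal]
  congr 1
  refine intervalIntegral.integral_congr fun t ht ↦ ?_
  rw [Set.uIcc_of_le zero_le_one] at ht
  push_cast [Complex.ofReal_cpow ht.1, Complex.ofReal_cpow (sub_nonneg.2 ht.2)]
  rfl

theorem betaMeasure_eq_withDensity_restrict_Ioc (a b : ℝ) :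
    betaMeasure a b = (volume.restrict (Set.Ioc 0 1)).withDensity
      fun x ↦ ENNReal.ofReal (x ^ (a - 1) * (1 - x) ^ (b - 1) / beta a b) := by
  rw [← withDensity_indicator measurableSet_Ioc, betaMeasure]
  refine withDensity_congr_ae ?_
  filter_upwards [Measure.ae_ne volume 1] with x hx
  rw [betaPDF_eq]
  by_cases h : x ∈ Set.Ioc 0 1
  · rw [if_pos ⟨h.1, h.2.lt_of_ne hx⟩, Set.indicator_of_mem h]
    congr 1
    ring
  · rw [if_neg fun h' ↦ h ⟨h'.1, h'.2.le⟩, Set.indicator_of_notMem h, ENNReal.ofReal_zero]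

theorem setIntegral_betaMeasure {a b : ℝ} (ha : 0 < a) (hb : 0 < b) (f : ℝ → ℝ) {s : Set ℝ}
    (hs : MeasurableSet s) : ∫ x in s, f x ∂betaMeasure a b =
      (∫ x in Set.Ioc 0 1 ∩ s, x ^ (a - 1) * (1 - x) ^ (b - 1) * f x) / beta a b := by
  rw [betaMeasure_eq_withDensity_restrict_Ioc,
    setIntegral_withDensity_eq_setIntegral_toReal_smul (by fun_prop) (by simp) _ hs,
    Measure.restrict_restrict hs, Set.inter_comm, ← integral_div]
  refine setIntegral_congr_fun (measurableSet_Ioc.inter hs) fun x hx ↦ ?_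
  have hbeta := beta_pos ha hb
  have h0 : 0 ≤ x := hx.1.1.le
  have h1 : 0 ≤ 1 - x := sub_nonneg.2 hx.1.2
  simp only [smul_eq_mul]
  rw [ENNReal.toReal_ofReal (by positivity), div_mul_eq_mul_div]

theorem beta_natCast_add_one (k m : ℕ) :
    beta (k + 1) (m + 1) = ((k + m + 1) * (k + m).choose k : ℝ)⁻¹ := by
  have hsum : (k + 1 + (m + 1) : ℝ) = (k + m + 1 : ℕ) + 1 := by push_cast; ring
  rw [beta, hsum]
  simp only [Real.Gamma_nat_eq_factorial, Nat.factorial_succ, Nat.cast_add_choose]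
  push_cast
  field_simp

theorem eval_derivative_binomialTail_succ (k m : ℕ) (t : ℝ) :
    (binomialTail (k + m + 1) (k + 1)).derivative.eval t =
      t ^ k * (1 - t) ^ m / beta (k + 1) (m + 1) := by
  rw [derivative_binomialTail_succ (Nat.le_add_right k m), beta_natCast_add_one,
    div_inv_eq_mul]
  simp only [Polynomial.eval_mul, Polynomial.eval_add, Polynomial.eval_natCast, Polynomial.eval_one,
    eval_bernsteinPolynomial, Nat.add_sub_cancel_left, Nat.cast_add]
  ring

theorem betaMeasure_real_Iic (k m : ℕ) {t : ℝ} (ht : t ∈ Set.Icc 0 1) :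
    (betaMeasure (k + 1) (m + 1)).real (Set.Iic t) =
      (binomialTail (k + m + 1) (k + 1)).eval t := by
  calc (betaMeasure (k + 1) (m + 1)).real (Set.Iic t)
      = ∫ x in Set.Iic t, 1 ∂betaMeasure (k + 1) (m + 1) := by simp
    _ = (∫ x in 0..t, x ^ k * (1 - x) ^ m) / beta (k + 1) (m + 1) := by
        rw [setIntegral_betaMeasure (by positivity) (by positivity) _ measurableSet_Iic,
          Set.Ioc_inter_Iic, min_eq_right ht.2, ← intervalIntegral.integral_of_le ht.1]
        simp [Real.rpow_natCast]
    _ = ∫ x in 0..t, (binomialTail (k + m + 1) (k + 1)).derivative.eval x := by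
        simp only [eval_derivative_binomialTail_succ, intervalIntegral.integral_div]
    _ = (binomialTail (k + m + 1) (k + 1)).eval t := by
        rw [intervalIntegral.integral_eq_sub_of_hasDerivAt (fun x _ ↦ Polynomial.hasDerivAt _ x)
          ((Polynomial.continuous _).intervalIntegrable _ _),
          eval_zero_binomialTail (Nat.le_add_left 1 k), sub_zero]

theorem integral_bernsteinPolynomial_betaMeasure {a b : ℝ} (ha : 0 < a) (hb : 0 < b) {m j : ℕ}
    (hj : j ≤ m) : ∫ t, (bernsteinPolynomial ℝ m j).eval t ∂betaMeasure a b =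
      m.choose j * beta (a + j) (m - j + b) / beta a b := by
  have hjm : (0 : ℝ) ≤ m - j := sub_nonneg.2 (mod_cast hj)
  rw [← Beta_eq_beta (by positivity) (by positivity), Beta, ← intervalIntegral.integral_const_mul,
    intervalIntegral.integral_of_le zero_le_one, ← setIntegral_univ,
    setIntegral_betaMeasure ha hb _ .univ, Set.inter_univ]
  simp only [integral_Ioc_eq_integral_Ioo]
  congr 1
  refine setIntegral_congr_fun measurableSet_Ioo fun t ht ↦ ?_
  have h0 : 0 < t := ht.1
  have h1 : 0 < 1 - t := sub_pos.2 ht.2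
  calc t ^ (a - 1) * (1 - t) ^ (b - 1) * (bernsteinPolynomial ℝ m j).eval t
      = m.choose j * ((t ^ (a - 1) * t ^ j) * ((1 - t) ^ (b - 1) * (1 - t) ^ (m - j))) := by
        rw [eval_bernsteinPolynomial]
        ring
    _ = m.choose j * (t ^ (a + j - 1) * (1 - t) ^ (m - j + b - 1)) := by
        rw [← Real.rpow_add_natCast h0.ne', ← Real.rpow_add_natCast h1.ne', Nat.cast_sub hj]
        ring_nf

theorem integrable_betaMeasure_of_continuous {a b : ℝ} (ha : 0 < a) (hb : 0 < b) {f : ℝ → ℝ}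
    (hf : Continuous f) : Integrable f (betaMeasure a b) := by
  have := isProbabilityMeasureBeta ha hb
  obtain ⟨C, hC⟩ := isCompact_Icc.exists_bound_of_continuousOn (s := Set.Icc (0 : ℝ) 1)
    hf.continuousOn
  have hsupp : ∀ᵐ x ∂betaMeasure a b, x ∈ Set.Ioc (0 : ℝ) 1 := by
    rw [betaMeasure_eq_withDensity_restrict_Ioc]
    exact (withDensity_absolutelyContinuous _ _).ae_le (ae_restrict_mem measurableSet_Ioc)
  exact .of_bound hf.aestronglyMeasurable C
    (hsupp.mono fun x hx ↦ hC x (Set.Ioc_subset_Icc_self hx))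

theorem integral_binomialTail_betaMeasure {a b : ℝ} (ha : 0 < a) (hb : 0 < b) (m l : ℕ) :
    ∫ t, (binomialTail m l).eval t ∂betaMeasure a b =
      ∑ j ∈ Icc l m, m.choose j * beta (a + j) (m - j + b) / beta a b := by
  simp only [binomialTail, Polynomial.eval_finsetSum]
  rw [integral_finsetSum _ fun j _ ↦
    integrable_betaMeasure_of_continuous ha hb (Polynomial.continuous _)]
  exact Finset.sum_congr rfl fun j hj ↦
    integral_bernsteinPolynomial_betaMeasure ha hb (Finset.mem_Icc.1 hj).2

theorem continuous_cdf (μ : Measure ℝ) [IsProbabilityMeasure μ] [NullSingletonClass μ] :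
    Continuous (cdf μ) := by
  refine continuous_iff_continuousAt.2 fun x ↦ ?_
  have hjump : ENNReal.ofReal (cdf μ x - Function.leftLim (cdf μ) x) = 0 := by
    rw [← StieltjesFunction.measure_singleton, measure_cdf, measure_singleton]
  rw [(monotone_cdf μ).continuousAt_iff_leftLim_eq_rightLim, (cdf μ).rightLim_eq]
  exact ((monotone_cdf μ).leftLim_le le_rfl).antisymm (by simpa using hjump)

theorem exists_cdf_eq (μ : Measure ℝ) [IsProbabilityMeasure μ] [NullSingletonClass μ] {t : ℝ}
    (ht : t ∈ Set.Ioo 0 1) : ∃ x, cdf μ x = t :=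
  mem_range_of_exists_le_of_exists_ge (continuous_cdf μ)
    ((tendsto_cdf_atBot μ).eventually_le_const ht.1).exists
    ((tendsto_cdf_atTop μ).eventually_const_le ht.2).exists

theorem measureReal_cdf_le (μ : Measure ℝ) [IsProbabilityMeasure μ] [NullSingletonClass μ] {t : ℝ}
    (ht : t ∈ Set.Icc 0 1) : μ.real {x | cdf μ x ≤ t} = t := by
  apply le_antisymm
  · refine le_of_forall_gt_imp_ge_of_dense fun s hts ↦ ?_
    rcases le_or_gt 1 s with hs | hs
    · exact measureReal_le_one.trans hs
    obtain ⟨x, rfl⟩ := exists_cdf_eq μ ⟨ht.1.trans_lt hts, hs⟩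
    rw [cdf_eq_real μ x]
    exact measureReal_mono fun y hy ↦ ((monotone_cdf μ).reflect_lt (hy.trans_lt hts)).le
  · refine le_of_forall_lt_imp_le_of_dense fun s hst ↦ ?_
    rcases le_or_gt s 0 with hs | hs
    · exact hs.trans measureReal_nonneg
    obtain ⟨x, rfl⟩ := exists_cdf_eq μ ⟨hs, hst.trans_le ht.2⟩
    rw [cdf_eq_real μ x]
    exact measureReal_mono fun y hy ↦ ((monotone_cdf μ) hy).trans hst.le

theorem eq_of_forall_mem_Icc_measureReal_Iic_eq {μ ν : Measure ℝ} [IsProbabilityMeasure μ]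
    [IsProbabilityMeasure ν] {a b : ℝ}
    (h : ∀ t ∈ Set.Icc a b, μ.real (Set.Iic t) = ν.real (Set.Iic t))
    (ha : ν.real (Set.Iic a) = 0) (hb : ν.real (Set.Iic b) = 1) : μ = ν := by
  have hab : a ≤ b := le_of_not_ge fun hba ↦ by
    linarith [measureReal_mono (μ := ν) (Set.Iic_subset_Iic.2 hba)]
  have h0 (ρ : Measure ℝ) [IsProbabilityMeasure ρ] (hρ : ρ.real (Set.Iic a) = 0) {t : ℝ}
      (hta : t ≤ a) : ρ.real (Set.Iic t) = 0 :=
    le_antisymm ((measureReal_mono (Set.Iic_subset_Iic.2 hta)).trans hρ.le) measureReal_nonneg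
  have h1 (ρ : Measure ℝ) [IsProbabilityMeasure ρ] (hρ : ρ.real (Set.Iic b) = 1) {t : ℝ}
      (hbt : b ≤ t) : ρ.real (Set.Iic t) = 1 :=
    le_antisymm measureReal_le_one (hρ.ge.trans (measureReal_mono (Set.Iic_subset_Iic.2 hbt)))
  refine Measure.eq_of_cdf _ _ (StieltjesFunction.ext fun t ↦ ?_)
  rw [cdf_eq_real, cdf_eq_real]
  rcases le_or_gt t a with hta | hat
  · rw [h0 μ ((h a ⟨le_rfl, hab⟩).trans ha) hta, h0 ν ha hta]
  rcases le_or_gt b t with hbt | htb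
  · rw [h1 μ ((h b ⟨hab, le_rfl⟩).trans hb) hbt, h1 ν hb hbt]
  exact h t ⟨hat.le, htb.le⟩

theorem measureReal_pi_orderStatistic_mem (μ : Measure ℝ) [IsProbabilityMeasure μ] {n k : ℕ}
    (hk : 1 ≤ k) (hkn : k ≤ n) {A : Set ℝ} (hA : IsLowerSet A) :
    (Measure.pi fun _ : Fin n ↦ μ).real {w | orderStatistic w k ∈ A} =
      (binomialTail n k).eval (μ.real A) := by
  classical
  simp only [orderStatistic_mem_iff_le_card hk hkn hA]
  rw [measureReal_pi_le_card μ hA.ordConnected.measurableSet, Fintype.card_fin]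

theorem map_cdf_orderStatistic_pi (μ : Measure ℝ) [IsProbabilityMeasure μ] [NullSingletonClass μ]
    {n k : ℕ} (hk : 1 ≤ k) (hkn : k ≤ n) :
    (Measure.pi fun _ : Fin n ↦ μ).map (fun w ↦ cdf μ (orderStatistic w k)) =
      betaMeasure k (n + 1 - k) := by
  obtain ⟨k, rfl⟩ := Nat.exists_eq_add_of_le' hk
  obtain ⟨m, rfl⟩ := Nat.exists_eq_add_of_le hkn
  have hm : ((k + 1 + m : ℕ) + 1 - (k + 1 : ℕ) : ℝ) = m + 1 := by push_cast; ring
  have hmeas : Measurable fun w : Fin (k + 1 + m) → ℝ ↦ cdf μ (orderStatistic w (k + 1)) :=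
    (monotone_cdf μ).measurable.comp (measurable_orderStatistic hk hkn)
  have := Measure.isProbabilityMeasure_map (μ := Measure.pi fun _ : Fin (k + 1 + m) ↦ μ)
    hmeas.aemeasurable
  have := isProbabilityMeasureBeta (α := k + 1) (β := m + 1) (by positivity) (by positivity)
  rw [hm, Nat.cast_add_one]
  refine eq_of_forall_mem_Icc_measureReal_Iic_eq (a := 0) (b := 1) (fun t ht ↦ ?_) ?_ ?_
  · have hA : IsLowerSet {x | cdf μ x ≤ t} := fun x y hyx hx ↦ (monotone_cdf μ hyx).trans hx
    rw [map_measureReal_apply hmeas measurableSet_Iic, betaMeasure_real_Iic k m ht,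
      Nat.add_right_comm k m 1]
    exact (measureReal_pi_orderStatistic_mem μ hk hkn hA).trans
      (by rw [measureReal_cdf_le μ ht])
  · rw [betaMeasure_real_Iic k m (by simp), eval_zero_binomialTail hk]
  · rw [betaMeasure_real_Iic k m (by simp), eval_one_binomialTail (by omega)]

theorem map_prod_eq_prod_pi_of_iIndepFun_sum {ι κ Ω : Type*} [Fintype ι] [Fintype κ]
    [MeasurableSpace Ω] {P : Measure Ω} [IsProbabilityMeasure P] {E : ι ⊕ κ → Type*}
    [∀ s, MeasurableSpace (E s)] {Z : ∀ s, Ω → E s} (hZ : ∀ s, AEMeasurable (Z s) P)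
    (hindep : iIndepFun Z P) :
    P.map (fun ω ↦ ((fun i ↦ Z (.inl i) ω), fun j ↦ Z (.inr j) ω)) =
      (Measure.pi fun i ↦ P.map (Z (.inl i))).prod (Measure.pi fun j ↦ P.map (Z (.inr j))) := by
  have := fun s ↦ Measure.isProbabilityMeasure_map (hZ s)
  rw [← (measurePreserving_sumPiEquivProdPi fun s ↦ P.map (Z s)).map_eq,
    ← (iIndepFun_iff_map_fun_eq_pi_map hZ).1 hindep,
    AEMeasurable.map_map_of_aemeasurable (by fun_prop) (by fun_prop)]
  rfl

theorem measurableSet_orderStatistic_le {n m k l : ℕ} (hk : 1 ≤ k) (hkn : k ≤ n) (hl : 1 ≤ l)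
    (hlm : l ≤ m) : MeasurableSet {p : (Fin n → ℝ) × (Fin m → ℝ) |
      orderStatistic p.2 l ≤ orderStatistic p.1 k} :=
  measurableSet_le ((measurable_orderStatistic hl hlm).comp measurable_snd)
    ((measurable_orderStatistic hk hkn).comp measurable_fst)

theorem measureReal_prod_pi_orderStatistic_le (μ : Measure ℝ) [IsProbabilityMeasure μ]
    [NullSingletonClass μ] {n m k l : ℕ} (hk : 1 ≤ k) (hkn : k ≤ n) (hl : 1 ≤ l) (hlm : l ≤ m) :
    ((Measure.pi fun _ : Fin n ↦ μ).prod (Measure.pi fun _ : Fin m ↦ μ)).real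
        {p | orderStatistic p.2 l ≤ orderStatistic p.1 k} =
      ∑ j ∈ Icc l m, m.choose j * beta (k + j) (m - j + (n + 1 - k)) / beta k (n + 1 - k) := by
  have hle := measurableSet_orderStatistic_le hk hkn hl hlm
  have hsection (x : ℝ) : (Measure.pi fun _ : Fin m ↦ μ).real {v | orderStatistic v l ≤ x} =
      (binomialTail m l).eval (cdf μ x) := by
    rw [cdf_eq_real]
    exact measureReal_pi_orderStatistic_mem μ hl hlm (isLowerSet_Iic x)
  have hcdf : Measurable fun u : Fin n → ℝ ↦ cdf μ (orderStatistic u k) :=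
    (monotone_cdf μ).measurable.comp (measurable_orderStatistic hk hkn)
  have hk0 : (0 : ℝ) < k := mod_cast hk
  have hkn0 : (0 : ℝ) < n + 1 - k := by
    have : (k : ℝ) ≤ n := mod_cast hkn
    linarith
  calc _ = ∫ u : Fin n → ℝ, (Measure.pi fun _ : Fin m ↦ μ).real
          {v | orderStatistic v l ≤ orderStatistic u k} ∂Measure.pi fun _ ↦ μ := by
        rw [measureReal_def, Measure.prod_apply hle, ← integral_toReal
          (measurable_measure_prodMk_left hle).aemeasurable (by simp)]
        rfl
    _ = ∫ t, (binomialTail m l).eval t ∂betaMeasure k (n + 1 - k) := by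
        simp only [hsection]
        rw [← map_cdf_orderStatistic_pi μ hk hkn, integral_map hcdf.aemeasurable
          (Polynomial.continuous _).aestronglyMeasurable]
    _ = _ := integral_binomialTail_betaMeasure hk0 hkn0 m l

theorem measureReal_orderStatistic_le_of_iIndepFun {Ω : Type*} [MeasurableSpace Ω] {P : Measure Ω}
    [IsProbabilityMeasure P] {μ : Measure ℝ} [IsProbabilityMeasure μ] [NullSingletonClass μ]
    {n m k l : ℕ} (hk : 1 ≤ k) (hkn : k ≤ n) (hl : 1 ≤ l) (hlm : l ≤ m)
    {Z : Fin n ⊕ Fin m → Ω → ℝ} (hZ : ∀ s, AEMeasurable (Z s) P) (hlaw : ∀ s, P.map (Z s) = μ)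
    (hindep : iIndepFun Z P) :
    P.real {ω | orderStatistic (fun j ↦ Z (.inr j) ω) l ≤ orderStatistic (fun i ↦ Z (.inl i) ω) k} =
      ∑ j ∈ Icc l m, m.choose j * beta (k + j) (m - j + (n + 1 - k)) / beta k (n + 1 - k) := by
  have hsamples := map_prod_eq_prod_pi_of_iIndepFun_sum hZ hindep
  simp only [hlaw] at hsamples
  rw [← measureReal_prod_pi_orderStatistic_le μ hk hkn hl hlm, ← hsamples,
    map_measureReal_apply_of_aemeasurable (by fun_prop)
      (measurableSet_orderStatistic_le hk hkn hl hlm)]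
  rfl

/-- With `Z_1, …, Z_{N-1+M}` i.i.d. from an atomless real law, `R` the `k`-th smallest of
`Z_1, …, Z_{N-1}`, `S` the `k'`-th smallest of `Z_N, …, Z_{N-1+M}`, and
`C = #{j ≤ M : Z_{N-1+j} ≤ R}`, one has
`P(S ≤ R) = P(C ≥ k') = ∑_{j=k'}^M C(M,j) B(k+j, M-j+N-k) / B(k, N-k)`:
the upper tail of a Beta-Binomial(M, k, N-k) distribution. -/
theorem prob_kth_synthetic_neighbor_within_ball
    {Ω : Type*} [MeasurableSpace Ω] (P : Measure Ω) [IsProbabilityMeasure P]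
    (μ : Measure ℝ) [IsProbabilityMeasure μ] [NullSingletonClass μ]
    (N M k k' : ℕ) (hk1 : 1 ≤ k) (hkN : k ≤ N - 1) (hk'1 : 1 ≤ k') (hk'M : k' ≤ M)
    (Z : Fin (N - 1 + M) → Ω → ℝ)
    (hmeas : ∀ i, Measurable (Z i))
    (hlaw : ∀ i, P.map (Z i) = μ)
    (hindep : iIndepFun Z P) :
    P {ω | kthSmallest
            ((List.ofFn (fun j : Fin M => Z (Fin.natAdd (N - 1) j) ω)) : Multiset ℝ) k'
          ≤ kthSmallest
            ((List.ofFn (fun i : Fin (N - 1) => Z (Fin.castAdd M i) ω)) : Multiset ℝ) k}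
      = P {ω | k' ≤ (Finset.univ.filter (fun j : Fin M =>
            Z (Fin.natAdd (N - 1) j) ω ≤
              kthSmallest
                ((List.ofFn (fun i : Fin (N - 1) => Z (Fin.castAdd M i) ω)) : Multiset ℝ)
                k)).card}
    ∧ (P {ω | k' ≤ (Finset.univ.filter (fun j : Fin M =>
            Z (Fin.natAdd (N - 1) j) ω ≤
              kthSmallest
                ((List.ofFn (fun i : Fin (N - 1) => Z (Fin.castAdd M i) ω)) : Multiset ℝ)
                k)).card}).toReal
        = ∑ j ∈ Finset.Icc k' M,
            (M.choose j : ℝ) *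
              Beta ((k : ℝ) + j) ((M : ℝ) - j + N - k) / Beta (k : ℝ) ((N : ℝ) - k) := by
  have hcount (ω : Ω) : orderStatistic (fun j ↦ Z (Fin.natAdd (N - 1) j) ω) k' ≤
      orderStatistic (fun i ↦ Z (Fin.castAdd M i) ω) k ↔ _ :=
    orderStatistic_mem_iff_le_card hk'1 hk'M (isLowerSet_Iic _) _
  have hprob := congrArg P (congrArg Set.ofPred (funext fun ω ↦ propext (hcount ω)))
  refine ⟨hprob, (congrArg ENNReal.toReal hprob).symm.trans ?_⟩
  calc _ = ∑ j ∈ Icc k' M, M.choose j * beta (k + j) (M - j + ((N - 1 : ℕ) + 1 - k)) /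
          beta k ((N - 1 : ℕ) + 1 - k) :=
        measureReal_orderStatistic_le_of_iIndepFun hk1 hkN hk'1 hk'M
          (fun _ ↦ (hmeas _).aemeasurable) (fun _ ↦ hlaw _)
          (hindep.precomp finSumFinEquiv.injective)
    _ = _ := Finset.sum_congr rfl fun j hj ↦ by
        have hN : ((N - 1 : ℕ) + 1 : ℝ) = N := mod_cast Nat.sub_add_cancel (by omega)
        have hkN' : (k : ℝ) < N := mod_cast (by omega : k < N)
        have hk0 : (0 : ℝ) < k := mod_cast hk1
        have hjM : (j : ℝ) ≤ M := mod_cast (Finset.mem_Icc.1 hj).2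
        rw [Beta_eq_beta (by positivity) (by linarith), Beta_eq_beta hk0 (by linarith), hN,
          add_sub_assoc _ (N : ℝ)]
end

section
/- Let Z_1, …, Z_{N−1+M} be independent real-valued random variables, each with the same atomless Borel probability law, fix an integer k with 1 ≤ k ≤ N − 1, let R denote the k-th smallest element of the multiset {Z_1, …, Z_{N−1}}, and let C = #{j ∈ {1, …, M} : Z_{N−1+j} ≤ R}. Then for every integer j with 0 ≤ j ≤ M, P(C = j) = C(M, j) · B(k + j, M − j + N − k) / B(k, N − k), where C(M, j) is the binomial coefficient and B is the Beta function; that is, C follows the Beta-Binomial(M, k, N − k) distribution. -/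
open MeasureTheory ProbabilityTheory Finset

/-!
Let `R` have rank `k` among `n` real points. If no two points coincide, then exactly `j` of the `M`
synthetic points lie below `R` if and only if the set of points that are at most `R` consists of `k`
real and `j` synthetic points; `R` then has rank `k + j` among all `n + M` points. By
exchangeability the set of the `k + j` smallest points, together with its largest member, is
uniformly distributed over the `(k + j) * (n + M).choose (k + j)` pointed subsets of size `k + j`.
Of these, `k * n.choose k * M.choose j` have `k` real members and a real distinguished point, and
the Beta quotient appears because `B(k, n + 1 - k) = 1 / (k * n.choose k)`.
-/

section BetaFunction

lemma Beta_eq_beta_s12 {a b : ℝ} (ha : 0 < a) (hb : 0 < b) : Beta a b = beta a b := by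
  have hcomplex : Complex.betaIntegral a b = (Beta a b : ℂ) := by
    rw [Complex.betaIntegral, Beta, ← intervalIntegral.integral_ofReal]
    refine intervalIntegral.integral_congr_ae (Filter.Eventually.of_forall fun t ht => ?_)
    rw [Set.uIoc_of_le zero_le_one] at ht
    push_cast [Complex.ofReal_cpow ht.1.le, Complex.ofReal_cpow (sub_nonneg.2 ht.2)]
    rfl
  rw [beta_eq_betaIntegralReal a b ha hb, hcomplex, Complex.ofReal_re]

lemma Beta_natCast_eq_inv {n k : ℕ} (hk1 : 1 ≤ k) (hk : k ≤ n) :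
    Beta k (n + 1 - k) = ((k * n.choose k : ℕ) : ℝ)⁻¹ := by
  obtain ⟨a, rfl⟩ := Nat.exists_eq_add_of_le' hk1
  obtain ⟨b, rfl⟩ := Nat.exists_eq_add_of_le hk
  have hb : ((a + 1 + b : ℕ) : ℝ) + 1 - (a + 1 : ℕ) = b + 1 := by push_cast; ring
  have hsum : ((a + 1 : ℕ) : ℝ) + (b + 1) = (a + 1 + b : ℕ) + 1 := by push_cast; ring
  rw [hb, Beta_eq_beta_s12 (by positivity) (by positivity), beta, hsum, Nat.cast_succ a,
    Real.Gamma_nat_eq_factorial, Real.Gamma_nat_eq_factorial, Real.Gamma_nat_eq_factorial,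
    Nat.cast_mul, Nat.cast_add_choose, Nat.factorial_succ a]
  push_cast
  field_simp

end BetaFunction

section InitialSegment

variable {ι α : Type*} [Fintype ι] [LinearOrder α]

/-- The set of indices whose value under `x` is at most `x i`. For injective `x` its cardinality
is the rank of `x i` among the values of `x`, counted from `1`. -/
def initialSegment (x : ι → α) (i : ι) : Finset ι := {l | x l ≤ x i}

@[simp]
lemma mem_initialSegment {x : ι → α} {i l : ι} : l ∈ initialSegment x i ↔ x l ≤ x i := by
  simp [initialSegment]

lemma initialSegment_subset {x : ι → α} {i j : ι} (h : x i ≤ x j) :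
    initialSegment x i ⊆ initialSegment x j := fun l hl => by
  simp only [mem_initialSegment] at hl ⊢
  exact hl.trans h

lemma initialSegment_comp_perm (x : ι → α) (σ : Equiv.Perm ι) (i : ι) :
    (initialSegment (x ∘ σ) i).map σ.toEmbedding = initialSegment x (σ i) := by
  ext l
  simp [mem_map_equiv]

lemma card_initialSegment_injective {x : ι → α} (hx : x.Injective) :
    Function.Injective fun i => #(initialSegment x i) := by
  intro i j (hij : #(initialSegment x i) = #(initialSegment x j))
  wlog h : x i ≤ x j generalizing i j
  · exact (this hij.symm (le_of_not_ge h)).symm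
  have heq := eq_of_subset_of_card_le (initialSegment_subset h) hij.ge
  have hj : j ∈ initialSegment x i := heq ▸ mem_initialSegment.2 le_rfl
  exact hx (h.antisymm (mem_initialSegment.1 hj))

lemma exists_card_initialSegment_eq {x : ι → α} (hx : x.Injective) {r : ℕ}
    (hr : r ∈ Icc 1 (Fintype.card ι)) : ∃ i, #(initialSegment x i) = r := by
  have hmaps : Set.MapsTo (fun i => #(initialSegment x i)) (univ : Finset ι)
      (Icc 1 (Fintype.card ι)) := fun i _ => by
    exact mem_coe.2 (mem_Icc.2 ⟨card_pos.2 ⟨i, mem_initialSegment.2 le_rfl⟩, card_le_univ _⟩)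
  obtain ⟨i, -, hi⟩ := surjOn_of_injOn_of_card_le _ hmaps
    (card_initialSegment_injective hx).injOn (by simp) hr
  exact ⟨i, hi⟩

variable {κ : Type*} [Fintype κ]

lemma toLeft_initialSegment_inl (x : ι ⊕ κ → α) (i : ι) :
    (initialSegment x (.inl i)).toLeft = initialSegment (x ∘ Sum.inl) i := by
  ext l
  simp

lemma toRight_initialSegment_inl (x : ι ⊕ κ → α) (i : ι) :
    (initialSegment x (.inl i)).toRight = ({l | x (.inr l) ≤ x (.inl i)} : Finset κ) := by
  ext l
  simp

end InitialSegment

section KthSmallest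

lemma sort_ofFn_eq_ofFn_comp_sort {α : Type*} [LinearOrder α] {n : ℕ} (y : Fin n → α) :
    Multiset.sort (List.ofFn y : Multiset α) (· ≤ ·) = List.ofFn (y ∘ Tuple.sort y) := by
  refine List.Perm.eq_of_pairwise' (r := (· ≤ ·)) (Multiset.pairwise_sort _ _)
    (List.pairwise_ofFn.2 fun _ _ hij => Tuple.monotone_sort y hij.le) ?_
  rw [← Multiset.coe_eq_coe, Multiset.sort_eq, Multiset.coe_eq_coe]
  exact ((Tuple.sort y).ofFn_comp_perm y).symm

lemma card_initialSegment_sort {α : Type*} [LinearOrder α] {n : ℕ} {y : Fin n → α}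
    (hy : y.Injective) (a : Fin n) : #(initialSegment y (Tuple.sort y a)) = a + 1 := by
  have hmono : StrictMono (y ∘ Tuple.sort y) :=
    (Tuple.monotone_sort y).strictMono_of_injective (hy.comp (Tuple.sort y).injective)
  have hIic : initialSegment (y ∘ Tuple.sort y) a = Iic a := by
    ext l
    rw [mem_initialSegment, mem_Iic, hmono.le_iff_le]
  rw [← initialSegment_comp_perm, card_map, hIic, Fin.card_Iic]

lemma exists_kthSmallest_ofFn_eq {n k : ℕ} {y : Fin n → ℝ} (hy : y.Injective) (hk1 : 1 ≤ k)
    (hk : k ≤ n) : ∃ i, kthSmallest (List.ofFn y) k = y i ∧ #(initialSegment y i) = k := by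
  have hlt : k - 1 < n := by lia
  refine ⟨Tuple.sort y ⟨k - 1, hlt⟩, ?_, ?_⟩
  · rw [kthSmallest, sort_ofFn_eq_ofFn_comp_sort, List.getD_eq_getElem _ _ (by simpa using hlt)]
    simp
  · rw [card_initialSegment_sort hy]
    exact Nat.sub_add_cancel hk1

lemma card_le_kthSmallest_eq_iff {κ : Type*} [Fintype κ] {n k j : ℕ} {x : Fin n ⊕ κ → ℝ}
    (hx : x.Injective) (hk1 : 1 ≤ k) (hk : k ≤ n) :
    #{l | x (.inr l) ≤ kthSmallest (List.ofFn fun i => x (.inl i)) k} = j ↔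
      ∃ i, #(initialSegment x (.inl i)).toLeft = k ∧ #(initialSegment x (.inl i)).toRight = j := by
  have hinl : (x ∘ Sum.inl).Injective := hx.comp Sum.inl_injective
  obtain ⟨i, hi : kthSmallest (List.ofFn fun i => x (.inl i)) k = x (.inl i), hrank⟩ :=
    exists_kthSmallest_ofFn_eq hinl hk1 hk
  have hunique (i') : #(initialSegment (x ∘ Sum.inl) i') = k ↔ i' = i := by
    rw [← hrank]
    exact (card_initialSegment_injective hinl).eq_iff
  simp only [hi, toLeft_initialSegment_inl, toRight_initialSegment_inl, hunique, exists_eq_left]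

end KthSmallest

lemma exists_perm_map_eq {ι : Type*} {S T : Finset ι} (hcard : #S = #T) {i j : ι}
    (hi : i ∈ S) (hj : j ∈ T) : ∃ σ : Equiv.Perm ι, S.map σ.toEmbedding = T ∧ σ i = j := by
  classical
  obtain ⟨σ, rfl⟩ := Equiv.Perm.exists_map_finset_eq S T hcard
  refine ⟨σ.trans (Equiv.swap (σ i) j), ?_, by simp⟩
  have hswap : (S.map σ.toEmbedding).map (Equiv.swap (σ i) j).toEmbedding = S.map σ.toEmbedding :=
    Finset.map_perm fun l (hl : Equiv.swap (σ i) j l ≠ l) => by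
      rcases (Equiv.swap_apply_ne_self_iff.1 hl).2 with rfl | rfl
      exacts [mem_map_of_mem _ hi, hj]
  rw [← hswap, map_map]
  rfl

section PointedSubsets

/-- The pairs `⟨T, i⟩` of an `r`-element subset `T` of `ι` and a point `i ∈ T`: the possible values
of an initial segment of cardinality `r` together with the index of its largest element. -/
def pointedSubsets (ι : Type*) [Fintype ι] (r : ℕ) : Finset (Σ _ : Finset ι, ι) :=
  (powersetCard r univ).sigma id

/-- The pairs `⟨T, s⟩` where `T ⊆ ι ⊕ κ` has `k` elements in `ι` and `j` elements in `κ`, and the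
point `s ∈ T` lies in `ι`. -/
def splitPointedSubsets (ι κ : Type*) [Fintype ι] [Fintype κ] (k j : ℕ) :
    Finset (Σ _ : Finset (ι ⊕ κ), ι ⊕ κ) :=
  ((powersetCard k univ ×ˢ powersetCard j univ).map sumEquiv.symm.toEmbedding).sigma
    fun T => T.toLeft.map .inl

variable {ι κ : Type*} [Fintype ι] [Fintype κ] {r k j : ℕ}

lemma mem_pointedSubsets {p : Σ _ : Finset ι, ι} :
    p ∈ pointedSubsets ι r ↔ #p.1 = r ∧ p.2 ∈ p.1 := by
  simp [pointedSubsets]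

lemma card_pointedSubsets : #(pointedSubsets ι r) = r * (Fintype.card ι).choose r := by
  rw [pointedSubsets, card_sigma, sum_const_nat (m := r), card_powersetCard, card_univ, mul_comm]
  exact fun T hT => (mem_powersetCard.1 hT).2

lemma mem_splitPointedSubsets {p : Σ _ : Finset (ι ⊕ κ), ι ⊕ κ} :
    p ∈ splitPointedSubsets ι κ k j ↔
      (#p.1.toLeft = k ∧ #p.1.toRight = j) ∧ ∃ i ∈ p.1.toLeft, .inl i = p.2 := by
  simp [splitPointedSubsets, mem_map_equiv, sumEquiv]

lemma card_splitPointedSubsets : #(splitPointedSubsets ι κ k j) =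
    k * ((Fintype.card ι).choose k * (Fintype.card κ).choose j) := by
  rw [splitPointedSubsets, card_sigma, sum_const_nat (m := k), card_map, card_product,
    card_powersetCard, card_powersetCard, card_univ, card_univ, mul_comm]
  intro T hT
  simp only [mem_map_equiv, mem_product, mem_powersetCard] at hT
  rw [card_map]
  exact hT.1.2

lemma splitPointedSubsets_subset :
    splitPointedSubsets ι κ k j ⊆ pointedSubsets (ι ⊕ κ) (k + j) := by
  intro p hp
  obtain ⟨⟨hk, hj⟩, i, hi, hip⟩ := mem_splitPointedSubsets.1 hp
  rw [mem_pointedSubsets, ← card_toLeft_add_card_toRight, hk, hj, ← hip]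
  exact ⟨rfl, mem_toLeft.1 hi⟩

lemma exists_mem_splitPointedSubsets_iff {α : Type*} [LinearOrder α] {x : ι ⊕ κ → α} :
    (∃ p ∈ splitPointedSubsets ι κ k j, initialSegment x p.2 = p.1) ↔
      ∃ i, #(initialSegment x (.inl i)).toLeft = k ∧ #(initialSegment x (.inl i)).toRight = j := by
  constructor
  · rintro ⟨p, hp, hsegment⟩
    obtain ⟨hcard, i, -, hi⟩ := mem_splitPointedSubsets.1 hp
    exact ⟨i, by rwa [hi, hsegment]⟩
  · rintro ⟨i, hcard⟩
    exact ⟨⟨initialSegment x (.inl i), .inl i⟩,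
      mem_splitPointedSubsets.2 ⟨hcard, i, by simp, rfl⟩, rfl⟩

lemma eq_of_initialSegment_eq {α : Type*} [LinearOrder α] {x : ι → α} (hx : x.Injective)
    {p q : Σ _ : Finset ι, ι} (hp : p ∈ pointedSubsets ι r) (hq : q ∈ pointedSubsets ι r)
    (hxp : initialSegment x p.2 = p.1) (hxq : initialSegment x q.2 = q.1) : p = q := by
  rw [mem_pointedSubsets, ← hxp] at hp
  rw [mem_pointedSubsets, ← hxq] at hq
  have hpoint : p.2 = q.2 := card_initialSegment_injective hx (hp.1.trans hq.1.symm)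
  exact Sigma.ext (by rw [← hxp, ← hxq, hpoint]) (heq_of_eq hpoint)

lemma aedisjoint_initialSegment_eq {Ω α : Type*} [MeasurableSpace Ω] [LinearOrder α]
    {P : Measure Ω} {Y : ι → Ω → α} (hinj : ∀ᵐ ω ∂P, Function.Injective fun i => Y i ω)
    {p q : Σ _ : Finset ι, ι} (hp : p ∈ pointedSubsets ι r) (hq : q ∈ pointedSubsets ι r)
    (hpq : p ≠ q) :
    AEDisjoint P {ω | initialSegment (fun i => Y i ω) p.2 = p.1}
      {ω | initialSegment (fun i => Y i ω) q.2 = q.1} := by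
  refine measure_mono_null ?_ (ae_iff.1 hinj)
  rintro ω ⟨hωp, hωq⟩ hω
  exact hpq (eq_of_initialSegment_eq hω hp hq hωp hωq)

end PointedSubsets

/-- The family `Y` of random variables is exchangeable under `P`: permuting its indices does not
change its joint law. Joint a.e.-measurability is part of `IdentDistrib`. -/
def Exchangeable {Ω ι α : Type*} [MeasurableSpace Ω] [MeasurableSpace α] (Y : ι → Ω → α)
    (P : Measure Ω) : Prop :=
  ∀ σ : Equiv.Perm ι, IdentDistrib (fun ω i => Y (σ i) ω) (fun ω i => Y i ω) P P

section Independence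

variable {Ω ι α : Type*} [MeasurableSpace Ω] [MeasurableSpace α] {P : Measure Ω}

lemma exchangeable_of_iIndepFun [Finite ι] {Y : ι → Ω → α} (hY : ∀ i, AEMeasurable (Y i) P)
    (hindep : iIndepFun Y P) {μ : Measure α} (hlaw : ∀ i, P.map (Y i) = μ) : Exchangeable Y P := by
  have := Fintype.ofFinite ι
  have hpi (σ : Equiv.Perm ι) :
      P.map (fun ω i => Y (σ i) ω) = Measure.pi fun _ : ι => μ := by
    simpa only [hlaw] using (hindep.precomp σ.injective).map_fun_eq_pi_map fun i => hY (σ i)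
  exact fun σ => ⟨aemeasurable_pi_lambda _ fun i => hY (σ i), aemeasurable_pi_lambda _ hY,
    (hpi σ).trans (hpi 1).symm⟩

lemma ae_ne_of_indepFun [MeasurableEq α] [IsFiniteMeasure P] {X Y : Ω → α}
    (hX : AEMeasurable X P) (hY : AEMeasurable Y P) (hXY : IndepFun X Y P)
    [NullSingletonClass (P.map Y)] : ∀ᵐ ω ∂P, X ω ≠ Y ω := by
  have hdiag : ∀ᵐ p ∂(P.map X).prod (P.map Y), p ∈ (Set.diagonal α)ᶜ := by
    rw [Measure.ae_prod_mem_iff_ae_ae_mem measurableSet_diagonal.compl]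
    refine Filter.Eventually.of_forall fun x => ?_
    filter_upwards [Measure.ae_ne (P.map Y) x] with y hy
    exact hy.symm
  rw [← hXY.map_prod_eq_prod_map_map hX hY] at hdiag
  exact ae_of_ae_map (hX.prodMk hY) hdiag

lemma ae_injective_of_pairwise_indepFun [Countable ι] [MeasurableEq α] [IsFiniteMeasure P]
    {Y : ι → Ω → α} (hY : ∀ i, AEMeasurable (Y i) P)
    (hindep : Pairwise fun i j => IndepFun (Y i) (Y j) P)
    (hatom : ∀ i, NullSingletonClass (P.map (Y i))) :
    ∀ᵐ ω ∂P, Function.Injective fun i => Y i ω := by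
  have hne : ∀ᵐ ω ∂P, ∀ i j, i ≠ j → Y i ω ≠ Y j ω := by
    simp only [ae_all_iff]
    exact fun i j hij => ae_ne_of_indepFun (hY i) (hY j) (hindep hij)
  filter_upwards [hne] with ω hω i j hij
  exact not_imp_not.1 (hω i j) hij

end Independence

section Exchangeability

variable {Ω ι α : Type*} [MeasurableSpace Ω] [MeasurableSpace α] {P : Measure Ω} {Y : ι → Ω → α}

lemma Exchangeable.aemeasurable (hY : Exchangeable Y P) : AEMeasurable (fun ω i => Y i ω) P :=
  (hY 1).aemeasurable_snd

lemma Exchangeable.comp_equiv {κ : Type*} (hY : Exchangeable Y P) (e : κ ≃ ι) :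
    Exchangeable (fun i => Y (e i)) P := fun σ => by
  simpa [Function.comp_def] using
    (hY ((e.symm.trans σ).trans e)).comp (u := fun x i => x (e i)) (by fun_prop)

variable [Fintype ι] [LinearOrder α] [TopologicalSpace α] [OrderClosedTopology α]
  [SecondCountableTopology α] [OpensMeasurableSpace α]

lemma measurableSet_initialSegment_eq (i : ι) (T : Finset ι) :
    MeasurableSet {x : ι → α | initialSegment x i = T} := by
  simp only [Finset.ext_iff, mem_initialSegment, Set.ofPred_forall]
  refine .iInter fun l => ?_
  have hle : MeasurableSet {x : ι → α | x l ≤ x i} :=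
    measurableSet_le (measurable_pi_apply l) (measurable_pi_apply i)
  exact .iff hle (.const _)

namespace Exchangeable

lemma measure_initialSegment_eq (hY : Exchangeable Y P) {r : ℕ} {p q : Σ _ : Finset ι, ι}
    (hp : p ∈ pointedSubsets ι r) (hq : q ∈ pointedSubsets ι r) :
    P {ω | initialSegment (fun i => Y i ω) p.2 = p.1} =
      P {ω | initialSegment (fun i => Y i ω) q.2 = q.1} := by
  rw [mem_pointedSubsets] at hp hq
  obtain ⟨σ, hσ, hσp⟩ := exists_perm_map_eq (hp.1.trans hq.1.symm) hp.2 hq.2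
  calc P {ω | initialSegment (fun i => Y i ω) p.2 = p.1}
      = P {ω | initialSegment (fun i => Y (σ i) ω) p.2 = p.1} :=
        ((hY σ).measure_mem_eq (measurableSet_initialSegment_eq p.2 p.1)).symm
    _ = P {ω | initialSegment (fun i => Y i ω) q.2 = q.1} := by
        congr! 3 with ω
        rw [← hσ, ← hσp, ← initialSegment_comp_perm, map_inj]
        rfl

lemma measure_exists_initialSegment_eq_card_mul (hY : Exchangeable Y P)
    (hinj : ∀ᵐ ω ∂P, Function.Injective fun i => Y i ω) {r : ℕ} {G : Finset (Σ _ : Finset ι, ι)}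
    (hG : G ⊆ pointedSubsets ι r) {q : Σ _ : Finset ι, ι} (hq : q ∈ pointedSubsets ι r) :
    P {ω | ∃ p ∈ G, initialSegment (fun i => Y i ω) p.2 = p.1} =
      #G * P {ω | initialSegment (fun i => Y i ω) q.2 = q.1} := by
  have hunion : {ω | ∃ p ∈ G, initialSegment (fun i => Y i ω) p.2 = p.1} =
      ⋃ p ∈ G, {ω | initialSegment (fun i => Y i ω) p.2 = p.1} := by
    ext ω
    simp
  rw [hunion, measure_biUnion_finset₀,
    sum_congr rfl fun p hp => hY.measure_initialSegment_eq (hG hp) hq, sum_const, nsmul_eq_mul]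
  · exact fun p hp p' hp' hne => aedisjoint_initialSegment_eq hinj (hG hp) (hG hp') hne
  · exact fun p _ => hY.aemeasurable.nullMeasurableSet_preimage
      (measurableSet_initialSegment_eq p.2 p.1)

lemma measure_exists_initialSegment_eq_card_div [IsProbabilityMeasure P] (hY : Exchangeable Y P)
    (hinj : ∀ᵐ ω ∂P, Function.Injective fun i => Y i ω) {r : ℕ} {G : Finset (Σ _ : Finset ι, ι)}
    (hG : G ⊆ pointedSubsets ι r) :
    P {ω | ∃ p ∈ G, initialSegment (fun i => Y i ω) p.2 = p.1} =
      #G / #(pointedSubsets ι r) := by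
  obtain rfl | ⟨q, hq⟩ := G.eq_empty_or_nonempty
  · simp
  have hcard := mem_pointedSubsets.1 (hG hq)
  have hr : r ∈ Icc 1 (Fintype.card ι) := by
    rw [mem_Icc, ← hcard.1]
    exact ⟨card_pos.2 ⟨q.2, hcard.2⟩, card_le_univ _⟩
  have htotal :
      P {ω | ∃ p ∈ pointedSubsets ι r, initialSegment (fun i => Y i ω) p.2 = p.1} = 1 := by
    refine (measure_congr (Filter.eventuallyEq_univ.2 ?_)).trans measure_univ
    filter_upwards [hinj] with ω hω
    obtain ⟨i, hi⟩ := exists_card_initialSegment_eq hω hr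
    exact ⟨⟨_, i⟩, mem_pointedSubsets.2 ⟨hi, mem_initialSegment.2 le_rfl⟩, rfl⟩
  rw [hY.measure_exists_initialSegment_eq_card_mul hinj subset_rfl (hG hq)] at htotal
  rw [hY.measure_exists_initialSegment_eq_card_mul hinj hG (hG hq), div_eq_mul_inv,
    ENNReal.eq_inv_of_mul_eq_one_left ((mul_comm _ _).trans htotal)]

end Exchangeable

end Exchangeability

lemma Exchangeable.measure_card_le_kthSmallest_eq {Ω κ : Type*} [MeasurableSpace Ω] [Fintype κ]
    {P : Measure Ω} [IsProbabilityMeasure P] {n k : ℕ} {Y : Fin n ⊕ κ → Ω → ℝ}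
    (hY : Exchangeable Y P) (hinj : ∀ᵐ ω ∂P, Function.Injective fun s => Y s ω)
    (hk1 : 1 ≤ k) (hk : k ≤ n) (j : ℕ) :
    P {ω | #{l | Y (.inr l) ω ≤ kthSmallest (List.ofFn fun i => Y (.inl i) ω) k} = j} =
      (k * (n.choose k * (Fintype.card κ).choose j) : ℕ) /
        ((k + j) * (n + Fintype.card κ).choose (k + j) : ℕ) := by
  calc P {ω | #{l | Y (.inr l) ω ≤ kthSmallest (List.ofFn fun i => Y (.inl i) ω) k} = j}
      = P {ω | ∃ p ∈ splitPointedSubsets (Fin n) κ k j,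
          initialSegment (fun s => Y s ω) p.2 = p.1} := by
        refine measure_congr ?_
        filter_upwards [hinj] with ω hω
        exact propext ((card_le_kthSmallest_eq_iff hω hk1 hk).trans
          exists_mem_splitPointedSubsets_iff.symm)
    _ = #(splitPointedSubsets (Fin n) κ k j) / #(pointedSubsets (Fin n ⊕ κ) (k + j)) :=
        hY.measure_exists_initialSegment_eq_card_div hinj splitPointedSubsets_subset
    _ = _ := by
        rw [card_splitPointedSubsets, card_pointedSubsets, Fintype.card_sum, Fintype.card_fin]

theorem count_below_kth_order_statistic_betaBinomial_general
    {Ω : Type*} [MeasurableSpace Ω] (P : Measure Ω) [IsProbabilityMeasure P]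
    (N M k : ℕ) (hk1 : 1 ≤ k) (hkN : k ≤ N - 1)
    (Z : Fin (N - 1 + M) → Ω → ℝ)
    (hexch : Exchangeable Z P)
    (hinj : ∀ᵐ ω ∂P, Function.Injective fun i => Z i ω) :
    ∀ j : ℕ, j ≤ M →
      (P {ω | (Finset.univ.filter (fun j' : Fin M =>
          Z (Fin.natAdd (N - 1) j') ω ≤
            kthSmallest
              ((List.ofFn (fun i : Fin (N - 1) => Z (Fin.castAdd M i) ω)) : Multiset ℝ)
              k)).card = j}).toReal
        = (M.choose j : ℝ) *
            Beta ((k : ℝ) + j) ((M : ℝ) - j + N - k) / Beta (k : ℝ) ((N : ℝ) - k) := by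
  intro j hj
  have hprob := (hexch.comp_equiv finSumFinEquiv).measure_card_le_kthSmallest_eq
    (hinj.mono fun _ hω => hω.comp finSumFinEquiv.injective) hk1 hkN j
  obtain ⟨n, rfl⟩ : ∃ n, N = n + 1 := ⟨N - 1, by lia⟩
  have hnum : Beta (k + j) (M - j + (n + 1 : ℕ) - k) =
      (((k + j) * (n + M).choose (k + j) : ℕ) : ℝ)⁻¹ := by
    rw [← Beta_natCast_eq_inv (by lia) (by lia)]
    congr 1 <;> push_cast <;> ring
  have hden : Beta k ((n + 1 : ℕ) - k) = ((k * n.choose k : ℕ) : ℝ)⁻¹ := by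
    rw [← Beta_natCast_eq_inv hk1 (by lia), Nat.cast_succ]
  refine (congrArg ENNReal.toReal hprob).trans ?_
  rw [Fintype.card_fin, hnum, hden, ENNReal.toReal_div, ENNReal.toReal_natCast,
    ENNReal.toReal_natCast, Nat.add_sub_cancel, ← mul_assoc k, Nat.cast_mul (k * n.choose k),
    div_inv_eq_mul]
  ring

/-- Central distributional claim in the proof of Lemma 1: with `Z_1, …, Z_{N-1+M}` i.i.d.
from an atomless real law, `R` the `k`-th smallest of `Z_1, …, Z_{N-1}` and
`C = #{j ≤ M : Z_{N-1+j} ≤ R}`, the count `C` follows the Beta-Binomial(M, k, N − k)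
distribution. -/
theorem count_below_kth_order_statistic_betaBinomial
    {Ω : Type*} [MeasurableSpace Ω] (P : Measure Ω) [IsProbabilityMeasure P]
    (μ : Measure ℝ) [IsProbabilityMeasure μ] [NullSingletonClass μ]
    (N M k : ℕ) (hk1 : 1 ≤ k) (hkN : k ≤ N - 1)
    (Z : Fin (N - 1 + M) → Ω → ℝ)
    (hmeas : ∀ i, Measurable (Z i))
    (hlaw : ∀ i, P.map (Z i) = μ)
    (hindep : iIndepFun Z P) :
    ∀ j : ℕ, j ≤ M →
      (P {ω | (Finset.univ.filter (fun j' : Fin M =>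
          Z (Fin.natAdd (N - 1) j') ω ≤
            kthSmallest
              ((List.ofFn (fun i : Fin (N - 1) => Z (Fin.castAdd M i) ω)) : Multiset ℝ)
              k)).card = j}).toReal
        = (M.choose j : ℝ) *
            Beta ((k : ℝ) + j) ((M : ℝ) - j + N - k) / Beta (k : ℝ) ((N : ℝ) - k) :=
  count_below_kth_order_statistic_betaBinomial_general P N M k hk1 hkN Z
    (exchangeable_of_iIndepFun (fun i => (hmeas i).aemeasurable) hindep hlaw)
    (ae_injective_of_pairwise_indepFun (fun i => (hmeas i).aemeasurable)
      (fun _ _ => hindep.indepFun) fun i => hlaw i ▸ inferInstance)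
end
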